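/- Let b be a connected, canonically compactifiable graph over a finite discrete measure space (X,m), and let h ∈ ℓ²(X,m) with h not identically zero, h ≤ 0 pointwise and h̄ < 0. Then for every c < 0 there exists u ∈ D(L) with Lu = h e^u − c (i.e. Lu(x) = h(x)e^{u(x)} − c for all x ∈ X). -/

import Mathlib

open scoped BigOperators

/-- `u` is square-summable with respect to the measure `m`, i.e. `u ∈ ℓ²(X,m)`. -/
def MemL2 {X : Type*} (m : X → ℝ) (u : X → ℝ) : Prop :=
  Summable (fun x => u x ^ 2 * m x)

/-- `u` has finite energy: the sum defining `Q̃(u)` converges. -/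
def FinEnergy {X : Type*} (b : X → X → ℝ) (u : X → ℝ) : Prop :=
  Summable (fun p : X × X => b p.1 p.2 * (u p.1 - u p.2) ^ 2)

/-- The energy `Q(u) = (1/2) Σ_{x,y} b(x,y) (u(x) - u(y))²`. -/
noncomputable def energy {X : Type*} (b : X → X → ℝ) (u : X → ℝ) : ℝ :=
  (1 / 2) * ∑' p : X × X, b p.1 p.2 * (u p.1 - u p.2) ^ 2

/-- The bilinear energy form `Q(u,v) = (1/2) Σ_{x,y} b(x,y)(u(x)-u(y))(v(x)-v(y))`. -/
noncomputable def energyBil {X : Type*} (b : X → X → ℝ) (u v : X → ℝ) : ℝ :=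
  (1 / 2) * ∑' p : X × X, b p.1 p.2 * (u p.1 - u p.2) * (v p.1 - v p.2)

/-- The form domain `D(Q) = ℓ²(X,m) ∩ D̃`. -/
def MemDQ {X : Type*} (b : X → X → ℝ) (m : X → ℝ) (u : X → ℝ) : Prop :=
  MemL2 m u ∧ FinEnergy b u

/-- The form norm `‖u‖_Q = (Q(u) + ‖u‖₂²)^{1/2}`. -/
noncomputable def formNorm {X : Type*} (b : X → X → ℝ) (m : X → ℝ) (u : X → ℝ) : ℝ :=
  Real.sqrt (energy b u + ∑' x, u x ^ 2 * m x)

/-- `b` is a graph over `X`: symmetric, nonnegative, zero on the diagonal,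
with summable rows. -/
structure IsGraph {X : Type*} (b : X → X → ℝ) : Prop where
  symm : ∀ x y, b x y = b y x
  nonneg : ∀ x y, 0 ≤ b x y
  diag : ∀ x, b x x = 0
  row_summable : ∀ x, Summable (fun y => b x y)

/-- The graph `b` is connected: any two points are joined by a path of edges of
positive weight. -/
def GraphConnected {X : Type*} (b : X → X → ℝ) : Prop :=
  ∀ x y : X, Relation.ReflTransGen (fun a c => 0 < b a c) x y

/-- `(X,m)` is a finite discrete measure space: `m > 0` everywhere and `m(X) < ∞`. -/
structure FinMeasure {X : Type*} (m : X → ℝ) : Prop where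
  pos : ∀ x, 0 < m x
  summable : Summable m

/-- The graph `b` over `(X,m)` is canonically compactifiable: every function in
`D(Q)` is bounded. -/
def CanCompact {X : Type*} (b : X → X → ℝ) (m : X → ℝ) : Prop :=
  ∀ u : X → ℝ, MemDQ b m u → ∃ M : ℝ, ∀ x, |u x| ≤ M

/-- `u ∈ D(L)` with `L u = f` for the Neumann Laplacian `L`:
`u ∈ D(Q)`, `f ∈ ℓ²(X,m)` and `Q(u,v) = ⟨f,v⟩` for all `v ∈ D(Q)`. -/
def IsLap {X : Type*} (b : X → X → ℝ) (m : X → ℝ) (u f : X → ℝ) : Prop :=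
  MemDQ b m u ∧ MemL2 m f ∧
    ∀ v : X → ℝ, MemDQ b m v → energyBil b u v = ∑' x, f x * v x * m x

/-- The mean `ū = ⟨u,1⟩ / m(X)`. -/
noncomputable def mean {X : Type*} (m : X → ℝ) (u : X → ℝ) : ℝ :=
  (∑' x, u x * m x) / (∑' x, m x)

/-! Write `Q = energy b`. The functional `J(u) = Q(u) + 2 Σ (c u - h e^u) m` has the solutions
of `Lu = h e^u - c` as its critical points, and it is minimised by the direct method.

By Banach–Steinhaus, the inclusion `D(Q) ⊆ ℓ^∞` is bounded, and connectedness improves this to the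
oscillation bound `|u(x) - u(o)|² ≤ C Q(u)`. Fix `o` and set `d = (C Q(u))^{1/2}`. Since `h ≤ 0` and
`c < 0`, replacing `u` by `u(o) - d` in the exponential and by `u(o) + d` in the linear term gives
`J(u) ≥ d²/C + A e^{u(o) - d} - a (u(o) + d)` with `A, a > 0`. So `J` is coercive: `J(u) ≤ J(0)`
forces `|u| ≤ K`. On the box `|u| ≤ K + 1`, which is compact for pointwise convergence, `Q` is lower
semicontinuous and the potential part is continuous, so `J` has a minimiser there. It lies in the
smaller box, hence is a local minimum along every line `u + t v` with `v` in `D(Q) ⊆ ℓ^∞`. -/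

section SquareSummable

variable {X : Type*} {m u v : X → ℝ}

lemma FinMeasure.nonneg (hm : FinMeasure m) (x : X) : 0 ≤ m x := (hm.pos x).le

lemma MemL2.summable_mul (hm : ∀ x, 0 ≤ m x) (hu : MemL2 m u) (hv : MemL2 m v) :
    Summable fun x => u x * v x * m x := by
  refine .of_norm_bounded (Summable.add hu hv) fun x => ?_
  have hmul : |u x| * |v x| ≤ u x ^ 2 + v x ^ 2 := by
    nlinarith [sq_nonneg (|u x| - |v x|), sq_abs (u x), sq_abs (v x), sq_nonneg (u x),
      sq_nonneg (v x)]
  rw [norm_mul, norm_mul, Real.norm_of_nonneg (hm x), ← add_mul]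
  exact mul_le_mul_of_nonneg_right hmul (hm x)

lemma MemL2.add (hm : ∀ x, 0 ≤ m x) (hu : MemL2 m u) (hv : MemL2 m v) : MemL2 m (u + v) :=
  ((Summable.add hu hv).add ((hu.summable_mul hm hv).mul_left 2)).congr fun x => by
    simp only [Pi.add_apply]; ring

lemma MemL2.bdd_mul {K : ℝ} (hm : ∀ x, 0 ≤ m x) (hu : MemL2 m u) (hv : ∀ x, |v x| ≤ K) :
    MemL2 m (v * u) := by
  refine .of_nonneg_of_le (fun x => mul_nonneg (sq_nonneg _) (hm x)) (fun x => ?_)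
    (Summable.mul_left (K ^ 2) hu)
  rw [Pi.mul_apply, mul_pow, mul_assoc]
  exact mul_le_mul_of_nonneg_right (sq_le_sq' (abs_le.1 (hv x)).1 (abs_le.1 (hv x)).2)
    (mul_nonneg (sq_nonneg _) (hm x))

lemma FinMeasure.memL2_of_bounded {K : ℝ} (hm : FinMeasure m) (hu : ∀ x, |u x| ≤ K) :
    MemL2 m u := by
  have hone : MemL2 m 1 := by simpa [MemL2] using hm.summable
  simpa using hone.bdd_mul hm.nonneg hu

lemma FinMeasure.memL2_const (hm : FinMeasure m) (c : ℝ) : MemL2 m fun _ => c :=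
  hm.memL2_of_bounded fun _ => le_rfl

lemma MemL2.summable_mul_measure (hm : FinMeasure m) (hu : MemL2 m u) :
    Summable fun x => u x * m x := by
  simpa using hu.summable_mul hm.nonneg (hm.memL2_const 1)

lemma FinMeasure.exists_tsum_mul_le {δ : ℝ} (hm : FinMeasure m) (hδ : 0 < δ) :
    ∃ F : Finset X, ∀ (f : X → ℝ) (s : ℝ), (∀ x, 0 ≤ f x) → (∀ x, f x ≤ s) → 0 ≤ s →
      ∑' x, f x * m x ≤ ∑ x ∈ F, f x * m x + s * δ := by
  obtain ⟨F, hF⟩ := (hm.summable.hasSum.eventually (lt_mem_nhds (sub_lt_self _ hδ))).exists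
  refine ⟨F, fun f s hf hfs hs => ?_⟩
  have hfm : Summable fun x => f x * m x :=
    .of_nonneg_of_le (fun x => mul_nonneg (hf x) (hm.nonneg x))
      (fun x => mul_le_mul_of_nonneg_right (hfs x) (hm.nonneg x)) (hm.summable.mul_left s)
  have hgap : ∑ x ∈ F, (s * m x - f x * m x) ≤ ∑' x, (s * m x - f x * m x) :=
    ((hm.summable.mul_left s).sub hfm).sum_le_tsum F fun x _ =>
      sub_nonneg.2 (mul_le_mul_of_nonneg_right (hfs x) (hm.nonneg x))
  rw [(hm.summable.mul_left s).tsum_sub hfm, tsum_mul_left, Finset.sum_sub_distrib,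
    ← Finset.mul_sum] at hgap
  linarith [mul_le_mul_of_nonneg_left hF.le hs]

end SquareSummable

section Energy

variable {X : Type*} {b : X → X → ℝ} {u v : X → ℝ}

lemma finEnergy_iff_memL2 :
    FinEnergy b u ↔ MemL2 (fun p : X × X => b p.1 p.2) (fun p => u p.1 - u p.2) := by
  simp only [FinEnergy, MemL2, mul_comm]

lemma FinEnergy.summable_bilinear (hb : ∀ x y, 0 ≤ b x y) (hu : FinEnergy b u)
    (hv : FinEnergy b v) :
    Summable fun p : X × X => b p.1 p.2 * (u p.1 - u p.2) * (v p.1 - v p.2) := by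
  have hmul := MemL2.summable_mul (m := fun p : X × X => b p.1 p.2) (fun p => hb p.1 p.2)
    (finEnergy_iff_memL2.1 hu) (finEnergy_iff_memL2.1 hv)
  exact hmul.congr fun p => by ring

lemma finEnergy_zero : FinEnergy b 0 := by simp [FinEnergy, summable_zero]

lemma FinEnergy.sub_const (hu : FinEnergy b u) (c : ℝ) : FinEnergy b fun x => u x - c := by
  simpa [FinEnergy] using hu

lemma energy_sub_const (u : X → ℝ) (c : ℝ) : energy b (fun x => u x - c) = energy b u := by
  simp [energy]

lemma energy_nonneg (hb : ∀ x y, 0 ≤ b x y) (u : X → ℝ) : 0 ≤ energy b u :=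
  mul_nonneg (by norm_num) (tsum_nonneg fun p => mul_nonneg (hb p.1 p.2) (sq_nonneg _))

lemma FinEnergy.hasSum_add_smul (hb : ∀ x y, 0 ≤ b x y) (hu : FinEnergy b u)
    (hv : FinEnergy b v) (t : ℝ) :
    HasSum (fun p : X × X => b p.1 p.2 * ((u + t • v) p.1 - (u + t • v) p.2) ^ 2)
      (2 * (energy b u + 2 * t * energyBil b u v + t ^ 2 * energy b v)) := by
  convert! (hu.hasSum.add ((hu.summable_bilinear hb hv).hasSum.mul_left (2 * t))).add
    (hv.hasSum.mul_left (t ^ 2)) using 1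
  · ext p
    simp only [Pi.add_apply, Pi.smul_apply, smul_eq_mul]
    ring
  · simp only [energy, energyBil]
    ring

lemma FinEnergy.add_smul (hb : ∀ x y, 0 ≤ b x y) (hu : FinEnergy b u) (hv : FinEnergy b v)
    (t : ℝ) : FinEnergy b (u + t • v) :=
  (hu.hasSum_add_smul hb hv t).summable

lemma FinEnergy.hasDerivAt_energy_line (hb : ∀ x y, 0 ≤ b x y) (hu : FinEnergy b u)
    (hv : FinEnergy b v) :
    HasDerivAt (fun t : ℝ => energy b (u + t • v)) (2 * energyBil b u v) 0 := by
  have hquad : (fun t : ℝ => energy b (u + t • v)) =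
      fun t => energy b u + t * (2 * energyBil b u v) + t ^ 2 * energy b v := by
    ext t
    rw [energy, (hu.hasSum_add_smul hb hv t).tsum_eq]
    ring
  rw [hquad]
  simpa using (((hasDerivAt_id (0 : ℝ)).mul_const (2 * energyBil b u v)).const_add
    (energy b u)).fun_add (((hasDerivAt_id (0 : ℝ)).fun_pow 2).mul_const (energy b v))

lemma FinEnergy.mul_sq_sub_le (hb : ∀ x y, 0 ≤ b x y) (hu : FinEnergy b u) (x y : X) :
    b x y * (u x - u y) ^ 2 ≤ 2 * energy b u := by
  have := hu.le_tsum (x, y) fun p _ => mul_nonneg (hb p.1 p.2) (sq_nonneg _)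
  rw [energy]
  linarith

lemma GraphConnected.exists_sq_sub_le (hb : ∀ x y, 0 ≤ b x y) (hconn : GraphConnected b)
    (o x : X) :
    ∃ C : ℝ, 0 ≤ C ∧ ∀ u, FinEnergy b u → (u x - u o) ^ 2 ≤ C * energy b u := by
  induction hconn o x with
  | refl => exact ⟨0, le_rfl, fun u _ => by simp⟩
  | @tail y z _ hyz ih =>
    obtain ⟨C, hC, hy⟩ := ih
    refine ⟨2 * C + 4 / b y z, by positivity, fun u hu => ?_⟩
    have hedge : (u y - u z) ^ 2 ≤ 2 * energy b u / b y z := by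
      rw [le_div_iff₀ hyz, mul_comm]
      exact hu.mul_sq_sub_le hb y z
    calc (u z - u o) ^ 2 ≤ 2 * (u y - u o) ^ 2 + 2 * (u y - u z) ^ 2 := by
          linarith [sq_nonneg ((u y - u o) + (u y - u z))]
      _ ≤ 2 * (C * energy b u) + 2 * (2 * energy b u / b y z) := by gcongr; exact hy u hu
      _ = (2 * C + 4 / b y z) * energy b u := by ring

end Energy

section FormSpace

variable {X : Type*} {b : X → X → ℝ} {m u : X → ℝ}

/-- The embedding of functions on `X` into families indexed by edges and vertices that turns the
form norm into the `ℓ²` norm: `√(b(x,y)/2) (u(x) - u(y))` on edges, `√m(x) u(x)` on vertices. -/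
noncomputable def formEmbedding (b : X → X → ℝ) (m : X → ℝ) :
    (X → ℝ) →ₗ[ℝ] (X × X ⊕ X → ℝ) where
  toFun u := Sum.elim (fun p => √(b p.1 p.2 / 2) * (u p.1 - u p.2)) (fun x => √(m x) * u x)
  map_add' u v := by
    ext (p | x) <;> simp only [Pi.add_apply, Sum.elim_inl, Sum.elim_inr] <;> ring
  map_smul' t u := by
    ext (p | x) <;>
      simp only [Pi.smul_apply, smul_eq_mul, RingHom.id_apply, Sum.elim_inl, Sum.elim_inr] <;> ring

@[simp]
lemma formEmbedding_inl (u : X → ℝ) (p : X × X) :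
    formEmbedding b m u (.inl p) = √(b p.1 p.2 / 2) * (u p.1 - u p.2) := rfl

@[simp]
lemma formEmbedding_inr (u : X → ℝ) (x : X) : formEmbedding b m u (.inr x) = √(m x) * u x := rfl

lemma sq_formEmbedding_inl (hb : ∀ x y, 0 ≤ b x y) (u : X → ℝ) (p : X × X) :
    formEmbedding b m u (.inl p) ^ 2 = 1 / 2 * (b p.1 p.2 * (u p.1 - u p.2) ^ 2) := by
  rw [formEmbedding_inl, mul_pow, Real.sq_sqrt (div_nonneg (hb _ _) two_pos.le)]
  ring

lemma sq_formEmbedding_inr (hm : ∀ x, 0 ≤ m x) (u : X → ℝ) (x : X) :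
    formEmbedding b m u (.inr x) ^ 2 = u x ^ 2 * m x := by
  rw [formEmbedding_inr, mul_pow, Real.sq_sqrt (hm x), mul_comm]

lemma MemDQ.hasSum_sq_formEmbedding (hb : ∀ x y, 0 ≤ b x y) (hm : ∀ x, 0 ≤ m x)
    (hu : MemDQ b m u) :
    HasSum (fun i => formEmbedding b m u i ^ 2) (energy b u + ∑' x, u x ^ 2 * m x) := by
  refine HasSum.sum ?_ ?_
  · simpa only [Function.comp_def, sq_formEmbedding_inl hb, energy] using
      hu.2.hasSum.mul_left (1 / 2)
  · simpa only [Function.comp_def, sq_formEmbedding_inr hm] using hu.1.hasSum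

lemma memDQ_of_summable_sq_formEmbedding (hb : ∀ x y, 0 ≤ b x y) (hm : ∀ x, 0 ≤ m x)
    (hu : Summable fun i => formEmbedding b m u i ^ 2) : MemDQ b m u := by
  have hvertex := hu.comp_injective Sum.inr_injective
  have hedge := hu.comp_injective Sum.inl_injective
  simp only [Function.comp_def, sq_formEmbedding_inr hm] at hvertex
  simp only [Function.comp_def, sq_formEmbedding_inl hb] at hedge
  exact ⟨hvertex, (summable_mul_left_iff (by norm_num)).1 hedge⟩

lemma eq_formEmbedding_of_mem_range (hm : ∀ x, 0 < m x) {f : X × X ⊕ X → ℝ}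
    (hf : f ∈ LinearMap.range (formEmbedding b m)) :
    formEmbedding b m (fun x => (√(m x))⁻¹ * f (.inr x)) = f := by
  obtain ⟨u, rfl⟩ := hf
  congr 1
  ext x
  rw [formEmbedding_inr, inv_mul_cancel_left₀ (Real.sqrt_ne_zero'.2 (hm x))]

lemma isClosed_range_formEmbedding (hm : ∀ x, 0 < m x) :
    IsClosed (LinearMap.range (formEmbedding b m) : Set (X × X ⊕ X → ℝ)) := by
  have hrange : (LinearMap.range (formEmbedding b m) : Set (X × X ⊕ X → ℝ)) =
      {f | formEmbedding b m (fun x => (√(m x))⁻¹ * f (.inr x)) = f} :=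
    Set.ext fun f => ⟨eq_formEmbedding_of_mem_range hm, fun hf => ⟨_, hf⟩⟩
  rw [hrange]
  refine isClosed_eq (continuous_pi ?_) continuous_id
  rintro (p | x) <;> simp only [formEmbedding_inl, formEmbedding_inr] <;> fun_prop

/-- The form domain `D(Q)` with the form norm, realised as a subspace of `ℓ²` through
`formEmbedding`. -/
noncomputable def formSpace (b : X → X → ℝ) (m : X → ℝ) :
    Submodule ℝ (lp (fun _ : X × X ⊕ X => ℝ) 2) :=
  (LinearMap.range (formEmbedding b m)).comap
    (LinearMap.pi fun i => lp.evalₗ (𝕜 := ℝ) (fun _ : X × X ⊕ X => ℝ) 2 i)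

lemma isClosed_formSpace (hm : ∀ x, 0 < m x) :
    IsClosed (formSpace b m : Set (lp (fun _ : X × X ⊕ X => ℝ) 2)) :=
  (isClosed_range_formEmbedding hm).preimage lp.uniformContinuous_coe.continuous

/-- Evaluation at a vertex, as a continuous functional on the form domain. -/
noncomputable def formSpaceEval (b : X → X → ℝ) (m : X → ℝ) (x : X) : formSpace b m →L[ℝ] ℝ :=
  (√(m x))⁻¹ • (lp.evalCLM ℝ (fun _ : X × X ⊕ X => ℝ) 2 (.inr x)).comp (formSpace b m).subtypeL

lemma formSpaceEval_apply (x : X) (f : formSpace b m) :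
    formSpaceEval b m x f = (√(m x))⁻¹ * (f : X × X ⊕ X → ℝ) (.inr x) := rfl

lemma formSpace.memDQ_eval (hb : ∀ x y, 0 ≤ b x y) (hm : ∀ x, 0 < m x) (f : formSpace b m) :
    MemDQ b m fun x => formSpaceEval b m x f := by
  apply memDQ_of_summable_sq_formEmbedding hb fun x => (hm x).le
  have hf : ⇑f.1 ∈ LinearMap.range (formEmbedding b m) := f.2
  simp only [formSpaceEval_apply]
  rw [eq_formEmbedding_of_mem_range hm hf]
  simpa using (lp.memℓp f.1).summable (by norm_num)

lemma MemDQ.exists_formSpace (hb : ∀ x y, 0 ≤ b x y) (hm : ∀ x, 0 < m x) (hu : MemDQ b m u) :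
    ∃ f : formSpace b m, (∀ x, formSpaceEval b m x f = u x) ∧ ‖f‖ = formNorm b m u := by
  have hsum := hu.hasSum_sq_formEmbedding hb fun x => (hm x).le
  let f : lp (fun _ : X × X ⊕ X => ℝ) 2 :=
    ⟨formEmbedding b m u, memℓp_gen (by simpa using hsum.summable)⟩
  refine ⟨⟨f, u, rfl⟩, fun x => ?_, ?_⟩
  · exact inv_mul_cancel_left₀ (Real.sqrt_ne_zero'.2 (hm x)) (u x)
  · change ‖f‖ = _
    rw [lp.norm_eq_tsum_rpow (by norm_num), formNorm, ← hsum.tsum_eq, Real.sqrt_eq_rpow]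
    simp [f]

lemma CanCompact.exists_abs_le_formNorm (hb : ∀ x y, 0 ≤ b x y) (hm : ∀ x, 0 < m x)
    (hcc : CanCompact b m) :
    ∃ C : ℝ, ∀ u, MemDQ b m u → ∀ x, |u x| ≤ C * formNorm b m u := by
  have : CompleteSpace (formSpace b m) := (isClosed_formSpace hm).completeSpace_coe
  obtain ⟨C, hC⟩ := banach_steinhaus (g := formSpaceEval b m) fun f =>
    hcc _ (formSpace.memDQ_eval hb hm f)
  refine ⟨C, fun u hu x => ?_⟩
  obtain ⟨f, hfu, hfnorm⟩ := hu.exists_formSpace hb hm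
  rw [← hfu x, ← hfnorm]
  exact (formSpaceEval b m x).le_of_opNorm_le (hC x) f

lemma CanCompact.exists_sq_le (hb : ∀ x y, 0 ≤ b x y) (hm : ∀ x, 0 < m x)
    (hcc : CanCompact b m) :
    ∃ C : ℝ, 0 < C ∧
      ∀ u, MemDQ b m u → ∀ x, u x ^ 2 ≤ C * (energy b u + ∑' x, u x ^ 2 * m x) := by
  obtain ⟨A, hA⟩ := hcc.exists_abs_le_formNorm hb hm
  refine ⟨A ^ 2 + 1, by positivity, fun u hu x => ?_⟩
  have hN : 0 ≤ energy b u + ∑' x, u x ^ 2 * m x := add_nonneg (energy_nonneg hb u)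
    (tsum_nonneg fun x => mul_nonneg (sq_nonneg _) (hm x).le)
  calc u x ^ 2 = |u x| ^ 2 := (sq_abs _).symm
    _ ≤ (A * formNorm b m u) ^ 2 := pow_le_pow_left₀ (abs_nonneg _) (hA u hu x) 2
    _ = A ^ 2 * (energy b u + ∑' x, u x ^ 2 * m x) := by
      rw [mul_pow, formNorm, Real.sq_sqrt hN]
    _ ≤ (A ^ 2 + 1) * (energy b u + ∑' x, u x ^ 2 * m x) :=
      mul_le_mul_of_nonneg_right (le_add_of_nonneg_right zero_le_one) hN

-- Finitely many vertices are controlled by the energy along paths; the rest has mass below `δ`.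
lemma GraphConnected.exists_tsum_sq_sub_le (hb : ∀ x y, 0 ≤ b x y) (hconn : GraphConnected b)
    (hm : FinMeasure m) (o : X) {δ : ℝ} (hδ : 0 < δ) :
    ∃ T : ℝ, 0 ≤ T ∧ ∀ u s, FinEnergy b u → (∀ x, (u x - u o) ^ 2 ≤ s) →
      ∑' x, (u x - u o) ^ 2 * m x ≤ T * energy b u + s * δ := by
  obtain ⟨F, hF⟩ := hm.exists_tsum_mul_le hδ
  choose D hD hpath using hconn.exists_sq_sub_le hb o
  refine ⟨∑ x ∈ F, D x * m x, Finset.sum_nonneg fun x _ => mul_nonneg (hD x) (hm.nonneg x),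
    fun u s hu hs => ?_⟩
  refine (hF _ s (fun x => sq_nonneg _) hs ((sq_nonneg _).trans (hs o))).trans
    (add_le_add_left ?_ _)
  rw [Finset.sum_mul]
  refine Finset.sum_le_sum fun x _ => ?_
  calc (u x - u o) ^ 2 * m x ≤ D x * energy b u * m x :=
        mul_le_mul_of_nonneg_right (hpath x u hu) (hm.nonneg x)
    _ = D x * m x * energy b u := by ring

-- `s = sup (u - u(o))²` is finite, so the share `s / 2` coming from the tail can be absorbed.
lemma CanCompact.exists_sq_sub_le_energy (hb : ∀ x y, 0 ≤ b x y) (hconn : GraphConnected b)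
    (hm : FinMeasure m) (hcc : CanCompact b m) (o : X) :
    ∃ C : ℝ, 0 < C ∧ ∀ u, MemDQ b m u → ∀ x, (u x - u o) ^ 2 ≤ C * energy b u := by
  have : Nonempty X := ⟨o⟩
  obtain ⟨B, hB, hform⟩ := hcc.exists_sq_le hb hm.pos
  obtain ⟨T, hT, hl2⟩ :=
    hconn.exists_tsum_sq_sub_le hb hm o (δ := 1 / (2 * B)) (by positivity)
  refine ⟨2 * B * (1 + T), by positivity, fun u hu => ?_⟩
  obtain ⟨M, hM⟩ := hcc u hu
  have hbdd : ∀ x, |u x - u o| ≤ M + M := fun x => (abs_sub _ _).trans (add_le_add (hM x) (hM o))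
  have hsub : MemDQ b m fun x => u x - u o := ⟨hm.memL2_of_bounded hbdd, hu.2.sub_const _⟩
  set s := ⨆ x, (u x - u o) ^ 2
  have hs : ∀ x, (u x - u o) ^ 2 ≤ s := le_ciSup ⟨(M + M) ^ 2, by
    rintro _ ⟨x, rfl⟩
    exact sq_le_sq' (abs_le.1 (hbdd x)).1 (abs_le.1 (hbdd x)).2⟩
  have habsorb : s ≤ B * (1 + T) * energy b u + s / 2 := ciSup_le fun x =>
    calc (u x - u o) ^ 2
        ≤ B * (energy b u + ∑' x, (u x - u o) ^ 2 * m x) := by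
          simpa only [energy_sub_const] using hform _ hsub x
      _ ≤ B * (energy b u + (T * energy b u + s * (1 / (2 * B)))) := by
          gcongr
          exact hl2 u s hu.2 hs
      _ = B * (1 + T) * energy b u + s / 2 := by field_simp; ring
  exact fun x => (hs x).trans (by linarith)

end FormSpace

section Minimization

variable {X : Type*} {b : X → X → ℝ} {u : X → ℝ}

open scoped ENNReal

/-- The energy as an extended number, infinite off the functions of finite energy (where `energy`
takes the junk value `0`); this makes it lower semicontinuous for pointwise convergence. -/
noncomputable def extendedEnergy (b : X → X → ℝ) (u : X → ℝ) : ℝ≥0∞ :=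
  ∑' p : X × X, ENNReal.ofReal (1 / 2 * (b p.1 p.2 * (u p.1 - u p.2) ^ 2))

lemma lowerSemicontinuous_extendedEnergy : LowerSemicontinuous (extendedEnergy b) :=
  lowerSemicontinuous_tsum fun p =>
    (ENNReal.continuous_ofReal.comp (by fun_prop)).lowerSemicontinuous

lemma FinEnergy.extendedEnergy_eq (hb : ∀ x y, 0 ≤ b x y) (hu : FinEnergy b u) :
    extendedEnergy b u = ENNReal.ofReal (energy b u) := by
  rw [energy, ← tsum_mul_left, ENNReal.ofReal_tsum_of_nonneg _ (hu.mul_left _), extendedEnergy]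
  exact fun p => mul_nonneg (by norm_num) (mul_nonneg (hb p.1 p.2) (sq_nonneg _))

lemma finEnergy_of_extendedEnergy_ne_top (hb : ∀ x y, 0 ≤ b x y) (hu : extendedEnergy b u ≠ ⊤) :
    FinEnergy b u := by
  refine ((ENNReal.summable_toReal hu).mul_left 2).congr fun p => ?_
  rw [ENNReal.toReal_ofReal
    (mul_nonneg (by norm_num) (mul_nonneg (hb p.1 p.2) (sq_nonneg _)))]
  ring

lemma exists_isMinOn_energy_add (hb : ∀ x y, 0 ≤ b x y) {S : Set (X → ℝ)} (hS : IsCompact S)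
    {Φ : (X → ℝ) → ℝ} (hΦ : ContinuousOn Φ S) {u₀ : X → ℝ} (hu₀S : u₀ ∈ S)
    (hu₀ : FinEnergy b u₀) :
    ∃ u ∈ S, FinEnergy b u ∧ IsMinOn (fun v => energy b v + Φ v) (S ∩ {v | FinEnergy b v}) u := by
  obtain ⟨z, -, hz⟩ := hS.exists_isMinOn ⟨u₀, hu₀S⟩ hΦ
  have hΦz : ∀ v ∈ S, 0 ≤ Φ v - Φ z := fun v hv => sub_nonneg.2 (hz hv)
  let J : (X → ℝ) → ℝ≥0∞ := fun v => extendedEnergy b v + ENNReal.ofReal (Φ v - Φ z)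
  have hJ : ∀ v ∈ S, FinEnergy b v → J v = ENNReal.ofReal (energy b v + (Φ v - Φ z)) :=
    fun v hvS hv => by
      rw [ENNReal.ofReal_add (energy_nonneg hb v) (hΦz v hvS), ← hv.extendedEnergy_eq hb]
  have hJlsc : LowerSemicontinuousOn J S :=
    (lowerSemicontinuous_extendedEnergy.lowerSemicontinuousOn S).add
      (ENNReal.continuous_ofReal.comp_continuousOn
        (hΦ.sub continuousOn_const)).lowerSemicontinuousOn
  obtain ⟨u, huS, humin⟩ := hJlsc.exists_isMinOn ⟨u₀, hu₀S⟩ hS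
  have hu : FinEnergy b u := by
    have hfin : J u ≠ ⊤ := ne_top_of_le_ne_top
      ((hJ u₀ hu₀S hu₀).trans_ne ENNReal.ofReal_ne_top) (humin hu₀S)
    exact finEnergy_of_extendedEnergy_ne_top hb (ENNReal.add_ne_top.1 hfin).1
  refine ⟨u, huS, hu, fun v ⟨hvS, hv⟩ => ?_⟩
  have hle : J u ≤ J v := humin hvS
  rw [hJ u huS hu, hJ v hvS hv, ENNReal.ofReal_le_ofReal_iff
    (add_nonneg (energy_nonneg hb v) (hΦz v hvS))] at hle
  change energy b u + Φ u ≤ energy b v + Φ v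
  linarith

end Minimization

section KazdanWarner

variable {X : Type*} {b : X → X → ℝ} {m h u v : X → ℝ} {c K M : ℝ}

/-- The potential part `Σ (c u - h e^u) m` of the variational functional, whose first variation at
`u` is the linear functional represented by `c - h e^u`. -/
noncomputable def expPotential (m h : X → ℝ) (c : ℝ) (u : X → ℝ) : ℝ :=
  ∑' x, (c * u x - h x * Real.exp (u x)) * m x

/-- Twice the functional `½ Q(u) + Σ (c u - h e^u) m`, whose critical points are the solutions of
`Lu = h e^u - c`. -/
noncomputable def kazdanWarnerFunctional (b : X → X → ℝ) (m h : X → ℝ) (c : ℝ) (u : X → ℝ) : ℝ :=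
  energy b u + 2 * expPotential m h c u

lemma MemL2.mul_exp (hm : FinMeasure m) (hh : MemL2 m h) (hu : ∀ x, |u x| ≤ K) :
    MemL2 m fun x => h x * Real.exp (u x) := by
  have hexp : ∀ x, |Real.exp (u x)| ≤ Real.exp K := fun x => by
    rw [Real.abs_exp]
    exact Real.exp_le_exp.2 (abs_le.1 (hu x)).2
  simpa only [Pi.mul_def, mul_comm] using hh.bdd_mul hm.nonneg hexp

lemma MemL2.summable_expPotential (hm : FinMeasure m) (hh : MemL2 m h) (hu : ∀ x, |u x| ≤ K) :
    Summable fun x => (c * u x - h x * Real.exp (u x)) * m x := by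
  have hcu : Summable fun x => c * (u x * m x) :=
    ((hm.memL2_of_bounded hu).summable_mul_measure hm).mul_left c
  exact (hcu.sub ((hh.mul_exp hm hu).summable_mul_measure hm)).congr fun x => by ring

lemma MemL2.summable_add_abs_mul (hm : FinMeasure m) (hh : MemL2 m h) (A B : ℝ) :
    Summable fun x => (A + |h x| * B) * m x := by
  have habs : MemL2 m fun x => |h x| := by simpa only [MemL2, sq_abs] using hh
  exact ((hm.summable.mul_left A).add ((habs.summable_mul_measure hm).mul_left B)).congr
    fun x => by ring

lemma abs_sub_mul_exp_le (α a : ℝ) {s K : ℝ} (hs : s ≤ K) :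
    |α - a * Real.exp s| ≤ |α| + |a| * Real.exp K := by
  refine (abs_sub _ _).trans ?_
  rw [abs_mul, Real.abs_exp]
  gcongr

lemma continuousOn_expPotential (hm : FinMeasure m) (hh : MemL2 m h) (c K : ℝ) :
    ContinuousOn (expPotential m h c) {u | ∀ x, |u x| ≤ K} := by
  refine continuousOn_tsum (fun x => by fun_prop)
    (hh.summable_add_abs_mul hm (|c| * K) (Real.exp K)) fun x u hu => ?_
  rw [norm_mul, Real.norm_of_nonneg (hm.nonneg x), Real.norm_eq_abs]
  refine mul_le_mul_of_nonneg_right ?_ (hm.nonneg x)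
  calc |c * u x - h x * Real.exp (u x)| ≤ |c * u x| + |h x| * Real.exp K :=
        abs_sub_mul_exp_le _ _ (abs_le.1 (hu x)).2
    _ ≤ |c| * K + |h x| * Real.exp K := by
        rw [abs_mul]
        gcongr
        exact hu x

lemma hasDerivAt_mul_sub_mul_exp_line (c a p q t : ℝ) :
    HasDerivAt (fun t : ℝ => c * (p + t * q) - a * Real.exp (p + t * q))
      ((c - a * Real.exp (p + t * q)) * q) t := by
  have hline : HasDerivAt (fun t : ℝ => p + t * q) q t := by
    simpa using ((hasDerivAt_id t).mul_const q).const_add p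
  convert! (hline.const_mul c).sub (hline.exp.const_mul a) using 1
  ring

lemma hasDerivAt_expPotential_line (hm : FinMeasure m) (hh : MemL2 m h) (hu : ∀ x, |u x| ≤ K)
    (hv : ∀ x, |v x| ≤ M) :
    HasDerivAt (fun t : ℝ => expPotential m h c (u + t • v))
      (∑' x, (c - h x * Real.exp (u x)) * v x * m x) 0 := by
  have hbound : ∀ (x : X), ∀ t ∈ Metric.ball (0 : ℝ) 1,
      ‖(c - h x * Real.exp (u x + t * v x)) * v x * m x‖ ≤
        (|c| * M + |h x| * (Real.exp (K + M) * M)) * m x := fun x t ht => by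
    have htv : |t * v x| ≤ M := by
      rw [abs_mul]
      exact (mul_le_of_le_one_left (abs_nonneg _) (mem_ball_zero_iff.1 ht).le).trans (hv x)
    have hcoeff : |c - h x * Real.exp (u x + t * v x)| ≤ |c| + |h x| * Real.exp (K + M) :=
      abs_sub_mul_exp_le _ _ (add_le_add (abs_le.1 (hu x)).2 (abs_le.1 htv).2)
    rw [norm_mul, norm_mul, Real.norm_of_nonneg (hm.nonneg x), Real.norm_eq_abs, Real.norm_eq_abs]
    refine mul_le_mul_of_nonneg_right ?_ (hm.nonneg x)
    calc |c - h x * Real.exp (u x + t * v x)| * |v x|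
        ≤ (|c| + |h x| * Real.exp (K + M)) * M :=
          mul_le_mul hcoeff (hv x) (abs_nonneg _) (by positivity)
      _ = |c| * M + |h x| * (Real.exp (K + M) * M) := by ring
  have hzero : (0 : ℝ) ∈ Metric.ball (0 : ℝ) 1 := Metric.mem_ball_self one_pos
  simpa [expPotential] using hasDerivAt_tsum_of_isPreconnected (hh.summable_add_abs_mul hm _ _)
    Metric.isOpen_ball (convex_ball 0 1).isPreconnected
    (fun x t _ => (hasDerivAt_mul_sub_mul_exp_line c (h x) (u x) (v x) t).mul_const (m x))
    hbound hzero (by simpa using hh.summable_expPotential hm hu) hzero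

lemma isLap_of_isLocalMin_kazdanWarnerFunctional (hb : ∀ x y, 0 ≤ b x y) (hm : FinMeasure m)
    (hcc : CanCompact b m) (hh : MemL2 m h) (hu : MemDQ b m u)
    (hmin : ∀ v, MemDQ b m v →
      IsLocalMin (fun t : ℝ => kazdanWarnerFunctional b m h c (u + t • v)) 0) :
    IsLap b m u fun x => h x * Real.exp (u x) - c := by
  obtain ⟨K, hK⟩ := hcc u hu
  refine ⟨hu, ?_, fun v hv => ?_⟩
  · exact (hh.mul_exp hm hK).add hm.nonneg (hm.memL2_const (-c))
  obtain ⟨M, hM⟩ := hcc v hv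
  have hcrit : 2 * energyBil b u v + 2 * ∑' x, (c - h x * Real.exp (u x)) * v x * m x = 0 :=
    (hmin v hv).hasDerivAt_eq_zero ((hu.2.hasDerivAt_energy_line hb hv.2).add
      ((hasDerivAt_expPotential_line hm hh hK hM).const_mul 2))
  have hneg : ∑' x, (h x * Real.exp (u x) - c) * v x * m x =
      -∑' x, (c - h x * Real.exp (u x)) * v x * m x := by
    rw [← tsum_neg]
    exact tsum_congr fun x => by ring
  linarith

lemma le_expPotential (hm : FinMeasure m) (hh : MemL2 m h) (hnonpos : ∀ x, h x ≤ 0) (hc : c ≤ 0)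
    {l r : ℝ} (hl : ∀ x, l ≤ u x) (hr : ∀ x, u x ≤ r) :
    (∑' x, -h x * m x) * Real.exp l + c * r * ∑' x, m x ≤ expPotential m h c u := by
  have hhm : Summable fun x => -h x * m x := by simpa using (hh.summable_mul_measure hm).neg
  have hu : ∀ x, |u x| ≤ max |l| |r| := fun x => abs_le_max_abs_abs (hl x) (hr x)
  rw [← tsum_mul_right, ← tsum_mul_left,
    ← (hhm.mul_right _).tsum_add (hm.summable.mul_left _)]
  refine ((hhm.mul_right _).add (hm.summable.mul_left _)).tsum_le_tsum (fun x => ?_)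
    (hh.summable_expPotential hm hu)
  have hexp : -h x * Real.exp l ≤ -h x * Real.exp (u x) :=
    mul_le_mul_of_nonneg_left (Real.exp_le_exp.2 (hl x)) (neg_nonneg.2 (hnonpos x))
  have hlin : c * r ≤ c * u x := mul_le_mul_of_nonpos_left (hr x) hc
  calc -h x * m x * Real.exp l + c * r * m x = (c * r + -h x * Real.exp l) * m x := by ring
    _ ≤ (c * u x + -h x * Real.exp (u x)) * m x :=
      mul_le_mul_of_nonneg_right (add_le_add hlin hexp) (hm.nonneg x)
    _ = (c * u x - h x * Real.exp (u x)) * m x := by ring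

lemma exists_mul_abs_sub_le_mul_exp_sub {A : ℝ} (hA : 0 < A) (a : ℝ) :
    ∃ β : ℝ, ∀ s : ℝ, a * |s| - β ≤ A * Real.exp s - a * s := by
  refine ⟨2 * a ^ 2 / A, fun s => ?_⟩
  rcases le_total 0 s with hs | hs
  · rw [abs_of_nonneg hs]
    have hsq : 2 * (a * s) - 2 * a ^ 2 / A ≤ A * (s ^ 2 / 2) := by
      have : A * (s ^ 2 / 2) - (2 * (a * s) - 2 * a ^ 2 / A) = (A * s - 2 * a) ^ 2 / (2 * A) := by
        field_simp
        ring
      have : 0 ≤ (A * s - 2 * a) ^ 2 / (2 * A) := by positivity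
      linarith
    have hexp : A * (s ^ 2 / 2) ≤ A * Real.exp s := by
      have := Real.quadratic_le_exp_of_nonneg hs
      gcongr
      linarith
    linarith
  · rw [abs_of_nonpos hs]
    have : 0 ≤ 2 * a ^ 2 / A := by positivity
    linarith [mul_pos hA (Real.exp_pos s)]

lemma exists_abs_add_le_of_exp_sub_le {A a C : ℝ} (hA : 0 < A) (ha : 0 < a) (hC : 0 < C)
    (R : ℝ) :
    ∃ K : ℝ, ∀ s d : ℝ, 0 ≤ d →
      A * Real.exp s - a * s - 2 * a * d + d ^ 2 / C ≤ R → |s| + 2 * d ≤ K := by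
  obtain ⟨β, hβ⟩ := exists_mul_abs_sub_le_mul_exp_sub hA a
  set T := R + β + C * (2 * a + 1) ^ 2 / 4
  refine ⟨T / a + 2 * T, fun s d hd hR => ?_⟩
  have hquad : (2 * a + 1) * d - C * (2 * a + 1) ^ 2 / 4 ≤ d ^ 2 / C := by
    have : d ^ 2 / C - ((2 * a + 1) * d - C * (2 * a + 1) ^ 2 / 4) =
        (2 * d - C * (2 * a + 1)) ^ 2 / (4 * C) := by
      field_simp
      ring
    have : 0 ≤ (2 * d - C * (2 * a + 1)) ^ 2 / (4 * C) := by positivity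
    linarith
  have hsum : a * |s| + d ≤ T := by
    change a * |s| + d ≤ R + β + C * (2 * a + 1) ^ 2 / 4
    linarith [hβ s]
  have hs : |s| ≤ T / a := by
    rw [le_div_iff₀ ha]
    linarith
  linarith [mul_nonneg ha.le (abs_nonneg s)]

lemma CanCompact.exists_abs_le_of_kazdanWarnerFunctional_le (hb : ∀ x y, 0 ≤ b x y)
    (hconn : GraphConnected b) (hm : FinMeasure m) (hcc : CanCompact b m) (hh : MemL2 m h)
    (hne : h ≠ 0) (hnonpos : ∀ x, h x ≤ 0) (hc : c < 0) (R : ℝ) :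
    ∃ K : ℝ, ∀ u, MemDQ b m u → kazdanWarnerFunctional b m h c u ≤ R → ∀ x, |u x| ≤ K := by
  obtain ⟨o, ho⟩ := Function.ne_iff.1 hne
  obtain ⟨C, hC, hosc⟩ := hcc.exists_sq_sub_le_energy hb hconn hm o
  set A := ∑' x, -h x * m x
  set μ := ∑' x, m x
  have hA : 0 < A := by
    have hhm : Summable fun x => -h x * m x := by simpa using (hh.summable_mul_measure hm).neg
    exact hhm.tsum_pos (fun x => mul_nonneg (neg_nonneg.2 (hnonpos x)) (hm.nonneg x)) o
      (mul_pos (neg_pos.2 ((hnonpos o).lt_of_ne ho)) (hm.pos o))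
  have hμ : 0 < μ := hm.summable.tsum_pos hm.nonneg o (hm.pos o)
  have ha : 0 < 2 * (-c * μ) := mul_pos two_pos (mul_pos (neg_pos.2 hc) hμ)
  obtain ⟨K, hK⟩ := exists_abs_add_le_of_exp_sub_le (mul_pos two_pos hA) ha hC R
  refine ⟨K, fun u hu hR x => ?_⟩
  set d := √(C * energy b u)
  have hd : d ^ 2 / C = energy b u := by
    rw [Real.sq_sqrt (mul_nonneg hC.le (energy_nonneg hb u)), mul_div_cancel_left₀ _ hC.ne']
  have hosc' : ∀ y, |u y - u o| ≤ d := fun y => Real.abs_le_sqrt (hosc u hu y)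
  have hl : ∀ y, u o - d ≤ u y := fun y => by linarith [(abs_le.1 (hosc' y)).1]
  have hr : ∀ y, u y ≤ u o + d := fun y => by linarith [(abs_le.1 (hosc' y)).2]
  have hpot := le_expPotential hm hh hnonpos hc.le hl hr
  have hsd : |u o - d| + 2 * d ≤ K := hK _ d (Real.sqrt_nonneg _) (by
    rw [kazdanWarnerFunctional] at hR
    rw [hd]
    linarith)
  exact abs_le.2 ⟨by linarith [neg_abs_le (u o - d), hl x, Real.sqrt_nonneg (C * energy b u)],
    by linarith [le_abs_self (u o - d), hr x]⟩

lemma isCompact_setOf_forall_abs_le (K : ℝ) : IsCompact {u : X → ℝ | ∀ x, |u x| ≤ K} := by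
  simpa only [Set.pi, Set.mem_univ, true_implies, Set.mem_Icc, ← abs_le] using
    isCompact_univ_pi fun _ : X => isCompact_Icc (a := -K) (b := K)

lemma eventually_abs_add_smul_le {K' : ℝ} (hKK' : K < K') (hu : ∀ x, |u x| ≤ K)
    (hv : ∀ x, |v x| ≤ M) : ∀ᶠ t : ℝ in nhds 0, ∀ x, |(u + t • v) x| ≤ K' := by
  have hlim : Filter.Tendsto (fun t : ℝ => K + |t| * M) (nhds 0) (nhds K) :=
    Continuous.tendsto' (by fun_prop) _ _ (by simp)
  filter_upwards [hlim.eventually (gt_mem_nhds hKK')] with t ht x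
  calc |u x + t * v x| ≤ |u x| + |t| * |v x| := (abs_add_le _ _).trans_eq (by rw [abs_mul])
    _ ≤ K + |t| * M := by gcongr; exacts [hu x, hv x]
    _ ≤ K' := ht.le

end KazdanWarner

theorem stmt10_general {X : Type*} {b : X → X → ℝ} {m : X → ℝ} (hb : ∀ x y, 0 ≤ b x y)
    (hconn : GraphConnected b) (hm : FinMeasure m) (hcc : CanCompact b m) {h : X → ℝ}
    (hh : MemL2 m h) (hne : h ≠ 0) (hnonpos : ∀ x, h x ≤ 0) {c : ℝ} (hc : c < 0) :
    ∃ u : X → ℝ, IsLap b m u (fun x => h x * Real.exp (u x) - c) := by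
  obtain ⟨K, hcoercive⟩ := hcc.exists_abs_le_of_kazdanWarnerFunctional_le hb hconn hm hh hne
    hnonpos hc (kazdanWarnerFunctional b m h c 0)
  have hzero : ∀ x, |(0 : X → ℝ) x| ≤ K :=
    hcoercive 0 ⟨hm.memL2_const 0, finEnergy_zero⟩ le_rfl
  have hzero' : (0 : X → ℝ) ∈ {u : X → ℝ | ∀ x, |u x| ≤ K + 1} := fun x =>
    (hzero x).trans (lt_add_one K).le
  obtain ⟨u, huK', hu, hmin⟩ := exists_isMinOn_energy_add hb (isCompact_setOf_forall_abs_le (K + 1))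
    ((continuousOn_expPotential hm hh c (K + 1)).const_mul 2) hzero' finEnergy_zero
  have huDQ : MemDQ b m u := ⟨hm.memL2_of_bounded huK', hu⟩
  have huK : ∀ x, |u x| ≤ K := hcoercive u huDQ (hmin ⟨hzero', finEnergy_zero⟩)
  refine ⟨u, isLap_of_isLocalMin_kazdanWarnerFunctional hb hm hcc hh huDQ fun v hv => ?_⟩
  obtain ⟨M, hM⟩ := hcc v hv
  filter_upwards [eventually_abs_add_smul_le (lt_add_one K) huK hM] with t ht
  simpa using! hmin ⟨ht, hu.add_smul hb hv.2 t⟩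

/-- if `h ≤ 0` and `h̄ < 0`, then `Lu = h e^u - c` is solvable for
every `c < 0`. -/
theorem stmt10 {X : Type*} [Countable X] (b : X → X → ℝ) (m : X → ℝ)
    (hb : IsGraph b) (hconn : GraphConnected b) (hm : FinMeasure m)
    (hcc : CanCompact b m) (h : X → ℝ) (hh2 : MemL2 m h) (hne : h ≠ 0)
    (hnonpos : ∀ x, h x ≤ 0) (hmean : mean m h < 0) :
    ∀ c : ℝ, c < 0 →
      ∃ u : X → ℝ, IsLap b m u (fun x => h x * Real.exp (u x) - c) :=
  fun _ hc => stmt10_general hb.nonneg hconn hm hcc hh2 hne hnonpos hc
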